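/- Let V be a finite-dimensional real inner product space of dimension q, let S : V → V be a symmetric linear endomorphism (i.e. ⟨S x, y⟩ = ⟨x, S y⟩ for all x, y ∈ V), and let r be a natural number with 0 < r < q. If for every tuple of vectors v₁, …, v_r ∈ V one has ∑_{j=1}^{r} v₁ ∧ ⋯ ∧ v_{j-1} ∧ S(v_j) ∧ v_{j+1} ∧ ⋯ ∧ v_r = 0 in the r-th exterior power ⋀^r V, then S = 0. -/

import Mathlib

open scoped RealInnerProductSpace

/-!
Pairing `∑ j, v₁ ∧ ⋯ ∧ S vⱼ ∧ ⋯ ∧ vᵣ` with `φ₁ ∧ ⋯ ∧ φᵣ`, where `φ i (v j) = δᵢⱼ`, yields the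
partial trace `∑ j, φ j (S (v j))`, so all these partial traces vanish. If `ψ` kills every `v j`,
then replacing `φ j` by `φ j + ψ` leaves the system biorthogonal, whence `ψ (S (v j)) = 0`: in a
basis of more than `r` vectors, `S` has no off-diagonal entries. Comparing the partial traces
obtained by omitting each of `r + 1` basis vectors in turn shows that the corresponding diagonal
entries have a common value `t`, and then `r * t = 0`.
-/

open scoped nonZeroDivisors

section Biorthogonal

variable {R M ι κ : Type*} [CommRing R] [AddCommGroup M] [Module R M] [DecidableEq ι]

/-- Biorthogonality of a family of linear forms `φ` and a family of vectors `v` over the same index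
type. The vectors need not span, so this is weaker than `Module.DualBases`. -/
def IsBiorthogonal (φ : ι → Module.Dual R M) (v : ι → M) : Prop :=
  ∀ i j, φ i (v j) = if i = j then 1 else 0

namespace IsBiorthogonal

variable {φ : ι → Module.Dual R M} {v : ι → M}

theorem comp_injective [DecidableEq κ] (hφv : IsBiorthogonal φ v) {e : κ → ι}
    (he : Function.Injective e) : IsBiorthogonal (φ ∘ e) (v ∘ e) := fun i j => by
  simp [hφv (e i) (e j), he.eq_iff]

theorem update_add (hφv : IsBiorthogonal φ v) {ψ : Module.Dual R M} (hψ : ∀ i, ψ (v i) = 0)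
    (j : ι) : IsBiorthogonal (Function.update φ j (φ j + ψ)) v := fun i k => by
  obtain rfl | hij := eq_or_ne i j
  · simp [hφv i k, hψ k]
  · simp [hφv i k, hij]

theorem det_update [Fintype ι] (hφv : IsBiorthogonal φ v) (j : ι) (x : M) :
    (Matrix.of fun i k => φ k (Function.update v j x i)).det = φ j x := by
  have hrow : (Matrix.of fun i k => φ k (Function.update v j x i)) =
      (1 : Matrix ι ι R).updateRow j (fun k => φ k x) := by
    ext i k
    obtain rfl | hij := eq_or_ne i j
    · simp
    · simp [hij, hφv k i, Matrix.one_apply, eq_comm]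
  rw [hrow, ← Matrix.cramer_transpose_apply, Matrix.transpose_one, Matrix.cramer_one,
    Module.End.one_apply]

theorem pairingDual_sum_update {r : ℕ} {φ : Fin r → Module.Dual R M} {v : Fin r → M}
    (hφv : IsBiorthogonal φ v) (w : Fin r → M) :
    exteriorPower.pairingDual R M r (exteriorPower.ιMulti R r φ)
      (∑ j, exteriorPower.ιMulti R r (Function.update v j (w j))) = ∑ j, φ j (w j) := by
  simp only [map_sum, exteriorPower.pairingDual_ιMulti_ιMulti, hφv.det_update]

end IsBiorthogonal

theorem isBiorthogonal_coord (b : Module.Basis ι R M) : IsBiorthogonal b.coord b := fun i j => by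
  simp [Finsupp.single_apply, eq_comm]

end Biorthogonal

section PartialTrace

variable {R M : Type*} [CommRing R] [AddCommGroup M] [Module R M] {S : Module.End R M}

theorem sum_apply_eq_zero_of_sum_ιMulti_update_eq_zero {r : ℕ}
    (hS : ∀ v : Fin r → M,
      ∑ j, ExteriorAlgebra.ιMulti R r (Function.update v j (S (v j))) = 0)
    {φ : Fin r → Module.Dual R M} {v : Fin r → M} (hφv : IsBiorthogonal φ v) :
    ∑ j, φ j (S (v j)) = 0 := by
  have hwedge : ∑ j, exteriorPower.ιMulti R r (Function.update v j (S (v j))) = 0 :=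
    Subtype.ext (by simpa using hS v)
  rw [← hφv.pairingDual_sum_update, hwedge, map_zero]

theorem IsBiorthogonal.apply_eq_zero_of_annihilates {ι : Type*} [Fintype ι] [DecidableEq ι]
    (hS : ∀ (φ : ι → Module.Dual R M) (v : ι → M),
      IsBiorthogonal φ v → ∑ j, φ j (S (v j)) = 0)
    {φ : ι → Module.Dual R M} {v : ι → M} (hφv : IsBiorthogonal φ v)
    {ψ : Module.Dual R M} (hψ : ∀ i, ψ (v i) = 0) (j : ι) :
    ψ (S (v j)) = 0 := by
  have hdiff : ∀ i, Function.update φ j (φ j + ψ) i (S (v i)) - φ i (S (v i)) =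
      if i = j then ψ (S (v i)) else 0 := fun i => by
    obtain rfl | hij := eq_or_ne i j <;> simp [*]
  calc ψ (S (v j))
      = ∑ i, Function.update φ j (φ j + ψ) i (S (v i)) - ∑ i, φ i (S (v i)) := by
        simp [← Finset.sum_sub_distrib, hdiff]
    _ = 0 := by rw [hS _ _ (hφv.update_add hψ j), hS _ _ hφv, sub_zero]

theorem eq_zero_of_sum_succAbove_eq_zero {r : ℕ} (hr : (r : R) ∈ R⁰) {d : Fin (r + 1) → R}
    (hd : ∀ a : Fin (r + 1), ∑ j, d (a.succAbove j) = 0) (a : Fin (r + 1)) : d a = 0 := by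
  have hd_eq_sum : ∀ c, d c = ∑ j, d j := fun c => by
    rw [Fin.sum_univ_succAbove d c, hd c, add_zero]
  have hd_const : ∀ c, d c = d a := fun c => (hd_eq_sum c).trans (hd_eq_sum a).symm
  have hmul : d a * r = 0 := by
    simpa [hd_const, mul_comm] using hd a
  exact (mul_right_mem_nonZeroDivisors_eq_zero_iff hr).mp hmul

theorem IsBiorthogonal.apply_eq_zero {r : ℕ} (hr : (r : R) ∈ R⁰)
    (hS : ∀ (φ : Fin r → Module.Dual R M) (v : Fin r → M),
      IsBiorthogonal φ v → ∑ j, φ j (S (v j)) = 0)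
    {φ : Fin (r + 1) → Module.Dual R M} {v : Fin (r + 1) → M} (hφv : IsBiorthogonal φ v)
    (a c : Fin (r + 1)) : φ a (S (v c)) = 0 := by
  have hface : ∀ a : Fin (r + 1), IsBiorthogonal (φ ∘ a.succAbove) (v ∘ a.succAbove) :=
    fun a => hφv.comp_injective Fin.succAbove_right_injective
  obtain rfl | hca := eq_or_ne c a
  · exact eq_zero_of_sum_succAbove_eq_zero (d := fun j => φ j (S (v j))) hr
      (fun a => hS _ _ (hface a)) c
  · obtain ⟨j, rfl⟩ := Fin.exists_succAbove_eq hca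
    exact (hface a).apply_eq_zero_of_annihilates hS
      (fun i => by simp [hφv a (a.succAbove i), (Fin.succAbove_ne a i).symm]) j

end PartialTrace

theorem exists_embedding_mem_range_mem_range {α β : Type*} [Nontrivial α] (e : α ↪ β) (x y : β) :
    ∃ e' : α ↪ β, x ∈ Set.range e' ∧ y ∈ Set.range e' := by
  classical
  obtain ⟨a, c, hac⟩ := exists_pair_ne α
  obtain rfl | hxy := eq_or_ne x y
  · exact ⟨e.setValue a x, ⟨a, by simp⟩, ⟨a, by simp⟩⟩
  · refine ⟨(e.setValue a x).setValue c y, ⟨a, ?_⟩, ⟨c, by simp⟩⟩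
    rw [Function.Embedding.setValue_eq_of_ne hac (by simpa using hxy),
      Function.Embedding.setValue_eq]

theorem symmetric_endomorphism_eq_zero_of_derivation_extension_eq_zero_general
    {R M : Type*} [CommRing R] [AddCommGroup M] [Module R M] [Module.Free R M]
    (S : Module.End R M) (r : ℕ) (hr : (r : R) ∈ R⁰) (hrank : (r : Cardinal) < Module.rank R M)
    (h : ∀ v : Fin r → M,
      ∑ j, ExteriorAlgebra.ιMulti R r (Function.update v j (S (v j))) = 0) :
    S = 0 := by
  classical
  obtain _ | _ := subsingleton_or_nontrivial R
  · have : Subsingleton M := Module.subsingleton R M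
    exact Subsingleton.elim S 0
  have hr0 : r ≠ 0 := fun h0 => nonZeroDivisors.ne_zero hr (by simp [h0])
  have : Nontrivial (Fin (r + 1)) := Fin.nontrivial_iff_two_le.mpr (by lia)
  let b := Module.Free.chooseBasis R M
  obtain ⟨e⟩ : Nonempty (Fin (r + 1) ↪ Module.Free.ChooseBasisIndex R M) := by
    rw [Module.Free.rank_eq_card_chooseBasisIndex, ← Order.succ_le_iff] at hrank
    rw [← Cardinal.lift_mk_le']
    simpa using hrank
  refine b.ext fun i => b.forall_coord_eq_zero_iff.mp fun k => ?_
  obtain ⟨e', ⟨a, rfl⟩, ⟨c, rfl⟩⟩ := exists_embedding_mem_range_mem_range e i k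
  exact ((isBiorthogonal_coord b).comp_injective e'.injective).apply_eq_zero hr
    (fun _ _ => sum_apply_eq_zero_of_sum_ιMulti_update_eq_zero h) c a

/-- If the canonical derivation extension of a symmetric endomorphism `S` of a real inner
product space `V` to the `r`-th exterior power (for some `0 < r < dim V = q`) vanishes
identically, then `S = 0`.  The decomposable wedge `v₁ ∧ ⋯ ∧ v_r` is expressed via the
alternating map `ExteriorAlgebra.ιMulti ℝ r`, whose values lie in (and span) the `r`-th
exterior power `⋀[ℝ]^r V` inside the exterior algebra. -/
theorem symmetric_endomorphism_eq_zero_of_derivation_extension_eq_zero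
    {V : Type*} [NormedAddCommGroup V] [InnerProductSpace ℝ V] [FiniteDimensional ℝ V]
    (q : ℕ) (hq : Module.finrank ℝ V = q)
    (S : V →ₗ[ℝ] V) (hS : ∀ x y : V, ⟪S x, y⟫ = ⟪x, S y⟫)
    (r : ℕ) (hr0 : 0 < r) (hrq : r < q)
    (h : ∀ v : Fin r → V,
      ∑ j : Fin r, ExteriorAlgebra.ιMulti ℝ r (Function.update v j (S (v j))) = 0) :
    S = 0 :=
  symmetric_endomorphism_eq_zero_of_derivation_extension_eq_zero_general S r
    (mem_nonZeroDivisors_of_ne_zero (Nat.cast_ne_zero.mpr hr0.ne'))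
    (by rwa [← Module.finrank_eq_rank, hq, Nat.cast_lt]) h
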